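/- (The conditional entropy power bound is tighter than the Bayesian Cramér–Rao bound) Let X be a real random variable with a differentiable density f_X, finite second moment, finite differential entropy h(X), and finite Fisher information J(X) = ∫ f_X'(x)²/f_X(x) dx > 0, let W be an independent standard Gaussian, let a > 0, and let Y = X + √a·W with differential entropy h(Y). Then N(X|Y) ≥ 1/(1/a + J(X)), where N(X|Y) = a·N(X)/N(Y), N(X) = (1/(2πe)) e^{2h(X)} and N(Y) = (1/(2πe)) e^{2h(Y)}. Equality holds when X is Gaussian. -/

import Mathlib

open MeasureTheory Filter

/-! Given `Y = X + Z = y`, with `X` and `Z` independent of densities `f` and `g`, the posterior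
weight `x ↦ f x * g (y - x)` satisfies the Gaussian logarithmic Sobolev inequality, which monotone
transport to a Gaussian of variance `v` proves on the line. Integrating over `y`, the entropies of
the posteriors add up to `h(X) + h(Z)`, and their Fisher informations to `J(X) + J(Z)`, since the
cross term is a multiple of `(∫ f') (∫ g') = 0`. The choice `v = 1 / (J(X) + J(Z))` gives
`N(X) N(Z) / N(Y) ≥ 1 / (J(X) + J(Z))`, and Gaussian noise of variance `a` has `N(Z) = a` and
`J(Z) = 1 / a`. -/

open ProbabilityTheory Set Topology
open scoped Convolution NNReal Real

section RealLine

lemma exists_seq_tendsto_atTop_comp_tendsto_zero {φ : ℝ → ℝ} (hφ : Integrable φ) :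
    ∃ b : ℕ → ℝ, Tendsto b atTop atTop ∧ Tendsto (φ ∘ b) atTop (𝓝 0) := by
  have hcluster : MapClusterPt 0 atTop φ := by
    refine Metric.nhds_basis_ball.mapClusterPt_iff_frequently.2 fun ε hε hlarge => ?_
    obtain ⟨R, hR⟩ := eventually_atTop.1 hlarge
    have hsub : Ici R ⊆ {x | ε ≤ ‖φ x‖} := fun x hx => by simpa using hR x hx
    exact (hφ.measure_norm_ge_lt_top hε).ne (measure_mono_top hsub Real.volume_Ici)
  have : (comap φ (𝓝 0) ⊓ atTop).NeBot :=
    neBot_inf_comap_iff_map'.2 hcluster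
  obtain ⟨b, hb⟩ := exists_seq_tendsto (comap φ (𝓝 0) ⊓ atTop)
  exact ⟨b, (tendsto_inf.1 hb).2, tendsto_comap_iff.1 (tendsto_inf.1 hb).1⟩

lemma integral_nonpos_of_le_hasDerivAt {F F' L : ℝ → ℝ} (hF : ∀ x, HasDerivAt F (F' x) x)
    (hFi : Integrable F) (hL : Integrable L) (hle : ∀ x, L x ≤ F' x) : ∫ x, L x ≤ 0 := by
  obtain ⟨b, hb, hFb⟩ := exists_seq_tendsto_atTop_comp_tendsto_zero hFi
  obtain ⟨c, hc, hFc⟩ := exists_seq_tendsto_atTop_comp_tendsto_zero hFi.comp_neg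
  have hc' : Tendsto (fun n => -c n) atTop atBot := tendsto_neg_atTop_atBot.comp hc
  have hlim : Tendsto (fun n => F (b n) - F (-c n)) atTop (𝓝 0) := by
    simpa using hFb.sub hFc
  refine le_of_tendsto_of_tendsto (intervalIntegral_tendsto_integral hL hc' hb) hlim ?_
  filter_upwards [hc'.eventually_le_atBot 0, hb.eventually_ge_atTop 0] with n hcn hbn
  exact intervalIntegral.integral_le_sub_of_hasDeriv_right_of_le (hcn.trans hbn)
    (fun x _ => (hF x).continuousAt.continuousWithinAt) (fun x _ => (hF x).hasDerivWithinAt)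
    hL.integrableOn fun x _ => hle x

lemma norm_le_integral_norm_deriv {F F' : ℝ → ℝ} (hF : ∀ x, HasDerivAt F (F' x) x)
    (hFi : Integrable F) (hF'i : Integrable F') (x : ℝ) : ‖F x‖ ≤ ∫ t, ‖F' t‖ := by
  have hlim : Tendsto F atBot (𝓝 0) := tendsto_zero_of_hasDerivAt_of_integrableOn_Iic (a := x)
    (fun t _ => hF t) hF'i.integrableOn hFi.integrableOn
  calc ‖F x‖ = ‖∫ t in Iic x, F' t‖ := by
        rw [integral_Iic_of_hasDerivAt_of_tendsto' (fun t _ => hF t) hF'i.integrableOn hlim,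
          sub_zero]
    _ ≤ ∫ t in Iic x, ‖F' t‖ := norm_integral_le_integral_norm _
    _ ≤ ∫ t, ‖F' t‖ := setIntegral_le_integral hF'i.norm (ae_of_all _ fun t => norm_nonneg _)

lemma integral_pos_of_pos {p : ℝ → ℝ} (hp : ∀ x, 0 < p x) (hi : Integrable p) :
    0 < ∫ x, p x := by
  rw [integral_pos_iff_support_of_nonneg (fun x => (hp x).le) hi,
    Function.support_eq_univ fun x => (hp x).ne']
  simp

end RealLine

section Transport

lemma hasDerivAt_integral_Iic {p : ℝ → ℝ} (hc : Continuous p) (hi : Integrable p) (x : ℝ) :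
    HasDerivAt (fun x => ∫ t in Iic x, p t) (p x) x := by
  have hsplit : (fun x => ∫ t in Iic x, p t) =
      fun x => (∫ t in Iic 0, p t) + ∫ t in (0 : ℝ)..x, p t := by
    funext x
    rw [← intervalIntegral.integral_Iic_sub_Iic hi.integrableOn hi.integrableOn]
    ring
  rw [hsplit]
  exact (intervalIntegral.integral_hasDerivAt_right hi.intervalIntegrable
    (hc.stronglyMeasurableAtFilter _ _) hc.continuousAt).const_add _

lemma strictMono_integral_Iic {p : ℝ → ℝ} (hp : ∀ x, 0 < p x) (hc : Continuous p)
    (hi : Integrable p) : StrictMono fun x => ∫ t in Iic x, p t :=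
  strictMono_of_hasDerivAt_pos (hasDerivAt_integral_Iic hc hi) hp

lemma range_integral_Iic {p : ℝ → ℝ} (hp : ∀ x, 0 < p x) (hc : Continuous p)
    (hi : Integrable p) : range (fun x => ∫ t in Iic x, p t) = Ioo 0 (∫ t, p t) := by
  set F : ℝ → ℝ := fun x => ∫ t in Iic x, p t
  have hmono : StrictMono F := strictMono_integral_Iic hp hc hi
  have hbot : Tendsto F atBot (𝓝 0) := tendsto_integral_Iic_zero tendsto_id
  have htop : Tendsto F atTop (𝓝 (∫ t, p t)) :=
    (aecover_Iic tendsto_id).integral_tendsto_of_countably_generated hi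
  have hcont : Continuous F :=
    continuous_iff_continuousAt.2 fun x => (hasDerivAt_integral_Iic hc hi x).continuousAt
  refine Subset.antisymm ?_ fun y hy => ?_
  · rintro _ ⟨x, rfl⟩
    exact ⟨(hmono.monotone.le_of_tendsto hbot (x - 1)).trans_lt (hmono (sub_one_lt x)),
      (hmono (lt_add_one x)).trans_le (hmono.monotone.ge_of_tendsto htop (x + 1))⟩
  · exact mem_range_of_exists_le_of_exists_ge hcont
      ((hbot.eventually_lt_const hy.1).exists.imp fun _ => le_of_lt)
      ((htop.eventually_const_lt hy.2).exists.imp fun _ => le_of_lt)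

-- The transport map is `Q⁻¹ ∘ F`, for the distribution functions `F` of `p` and `Q` of `q`.
lemma exists_transport {p q : ℝ → ℝ} (hp : ∀ x, 0 < p x) (hpc : Continuous p)
    (hpi : Integrable p) (hq : ∀ x, 0 < q x) (hqc : Continuous q) (hqi : Integrable q)
    (hpq : ∫ x, p x = ∫ x, q x) :
    ∃ T : ℝ → ℝ, ∀ x, HasDerivAt T (p x / q (T x)) x := by
  set F : ℝ → ℝ := fun x => ∫ t in Iic x, p t
  set Q : ℝ → ℝ := fun x => ∫ t in Iic x, q t
  set R : ℝ → ℝ := Function.invFun Q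
  have hRQ : Function.LeftInverse R Q :=
    Function.leftInverse_invFun (strictMono_integral_Iic hq hqc hqi).injective
  have hQR (x : ℝ) : Q (R (F x)) = F x := by
    refine Function.invFun_eq (?_ : F x ∈ range Q)
    rw [range_integral_Iic hq hqc hqi, ← hpq, ← range_integral_Iic hp hpc hpi]
    exact mem_range_self x
  refine ⟨R ∘ F, fun x => ?_⟩
  have hQ' : HasStrictDerivAt Q (q (R (F x))) (R (F x)) :=
    hasStrictDerivAt_of_hasDerivAt_of_continuousAt
      (Eventually.of_forall (hasDerivAt_integral_Iic hqc hqi)) hqc.continuousAt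
  have hR' : HasDerivAt R (q (R (F x)))⁻¹ (F x) := by
    have := (hQ'.to_local_left_inverse (hq _).ne' (Eventually.of_forall hRQ)).hasDerivAt
    rwa [hQR] at this
  exact (hR'.comp x (hasDerivAt_integral_Iic hpc hpi x)).congr_deriv (by
    rw [Function.comp_apply, inv_mul_eq_div])

lemma integrable_mul_comp_transport {p q T φ : ℝ → ℝ} (hp : ∀ x, 0 < p x) (hq : ∀ x, 0 < q x)
    (hT : ∀ x, HasDerivAt T (p x / q (T x)) x) (hφ : Integrable fun t => q t * φ t) :
    Integrable fun x => p x * φ (T x) := by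
  have hT_pos (x : ℝ) : 0 < p x / q (T x) := div_pos (hp x) (hq _)
  have hcov := (integrableOn_image_iff_integrableOn_abs_deriv_smul MeasurableSet.univ
    (fun x _ => (hT x).hasDerivWithinAt) (strictMono_of_hasDerivAt_pos hT hT_pos).injective.injOn
    fun t => q t * φ t).1 hφ.integrableOn
  refine (integrableOn_univ.1 hcov).congr (ae_of_all _ fun x => ?_)
  have := (hq (T x)).ne'
  simp only [abs_of_pos (hT_pos x), smul_eq_mul]
  field_simp

end Transport

/-- A positive differentiable density on `ℝ` with finite total mass, differential entropy and Fisher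
information. The mass need not be `1`, so that the unnormalized posteriors `x ↦ f x * g (y - x)`
are covered. -/
structure IsRegularDensity (u : ℝ → ℝ) : Prop where
  pos : ∀ x, 0 < u x
  differentiable : Differentiable ℝ u
  integrable : Integrable u
  integrable_mul_log : Integrable fun x => u x * Real.log (u x)
  integrable_fisher : Integrable fun x => deriv u x ^ 2 / u x

/-- The differential entropy `h = -∫ u log u`, also used for densities of mass other than `1`. -/
noncomputable def differentialEntropy (u : ℝ → ℝ) : ℝ := -∫ x, u x * Real.log (u x)

/-- The Fisher information `J = ∫ u' ^ 2 / u` of a density with respect to translations. -/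
noncomputable def fisherInformation (u : ℝ → ℝ) : ℝ := ∫ x, deriv u x ^ 2 / u x

/-- The entropy power `N = e ^ (2 h) / (2 π e)`: the variance of the Gaussian with entropy `h`. -/
noncomputable def entropyPower (u : ℝ → ℝ) : ℝ :=
  (2 * π * Real.exp 1)⁻¹ * Real.exp (2 * differentialEntropy u)

lemma entropyPower_pos (u : ℝ → ℝ) : 0 < entropyPower u := by
  unfold entropyPower
  positivity

lemma log_two_pi_exp_one_mul_entropyPower (u : ℝ → ℝ) :
    Real.log (2 * π * Real.exp 1 * entropyPower u) = 2 * differentialEntropy u := by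
  unfold entropyPower
  rw [mul_inv_cancel_left₀ (by positivity), Real.log_exp]

lemma entropyPower_mul_div (f g k : ℝ → ℝ) :
    entropyPower f * entropyPower g / entropyPower k = (2 * π * Real.exp 1)⁻¹ *
      Real.exp (2 * (differentialEntropy f + differentialEntropy g - differentialEntropy k)) := by
  unfold entropyPower
  rw [mul_sub, mul_add, Real.exp_sub, Real.exp_add]
  field_simp

lemma deriv_const_mul_sq_div (u : ℝ → ℝ) (c x : ℝ) :
    deriv (fun x => c * u x) x ^ 2 / (c * u x) = c * (deriv u x ^ 2 / u x) := by
  rw [deriv_const_mul_field, mul_pow, mul_div_mul_comm, sq c, mul_self_div_self]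

lemma fisherInformation_const_mul (u : ℝ → ℝ) (c : ℝ) :
    fisherInformation (fun x => c * u x) = c * fisherInformation u := by
  simp only [fisherInformation, deriv_const_mul_sq_div, integral_const_mul]

namespace IsRegularDensity

variable {u : ℝ → ℝ}

lemma hasDerivAt (hu : IsRegularDensity u) (x : ℝ) : HasDerivAt u (deriv u x) x :=
  (hu.differentiable x).hasDerivAt

lemma integrable_deriv (hu : IsRegularDensity u) : Integrable (deriv u) := by
  refine (hu.integrable_fisher.add hu.integrable).mono'
    (measurable_deriv u).aestronglyMeasurable (ae_of_all _ fun x => ?_)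
  have hx := hu.pos x
  rw [Pi.add_apply, Real.norm_eq_abs, div_add' _ _ _ hx.ne', le_div_iff₀ hx]
  nlinarith [sq_nonneg (|deriv u x| - u x), sq_abs (deriv u x), abs_nonneg (deriv u x)]

lemma integral_deriv (hu : IsRegularDensity u) : ∫ x, deriv u x = 0 :=
  integral_eq_zero_of_hasDerivAt_of_integrable hu.hasDerivAt hu.integrable_deriv hu.integrable

lemma exists_le (hu : IsRegularDensity u) : ∃ C, ∀ x, u x ≤ C :=
  ⟨_, fun x => (Real.le_norm_self _).trans
    (norm_le_integral_norm_deriv hu.hasDerivAt hu.integrable hu.integrable_deriv x)⟩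

lemma const_mul_mul_log (hu : IsRegularDensity u) {c : ℝ} (hc : 0 < c) (x : ℝ) :
    c * u x * Real.log (c * u x) = c * (u x * Real.log (u x)) + c * Real.log c * u x := by
  rw [Real.log_mul hc.ne' (hu.pos x).ne']
  ring

lemma const_mul (hu : IsRegularDensity u) {c : ℝ} (hc : 0 < c) :
    IsRegularDensity fun x => c * u x where
  pos x := mul_pos hc (hu.pos x)
  differentiable := hu.differentiable.const_mul c
  integrable := hu.integrable.const_mul c
  integrable_mul_log := by
    simp only [hu.const_mul_mul_log hc]
    exact (hu.integrable_mul_log.const_mul c).add (hu.integrable.const_mul _)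
  integrable_fisher := by
    simp only [deriv_const_mul_sq_div]
    exact hu.integrable_fisher.const_mul c

lemma differentialEntropy_const_mul (hu : IsRegularDensity u) {c : ℝ} (hc : 0 < c) :
    differentialEntropy (fun x => c * u x) =
      c * differentialEntropy u - c * Real.log c * ∫ x, u x := by
  simp only [differentialEntropy, hu.const_mul_mul_log hc]
  rw [integral_add (hu.integrable_mul_log.const_mul c) (hu.integrable.const_mul _),
    integral_const_mul, integral_const_mul]
  ring

end IsRegularDensity

section Gaussian

variable (μ : ℝ) {v : ℝ≥0}

lemma hasDerivAt_gaussianPDFReal (hv : v ≠ 0) (x : ℝ) :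
    HasDerivAt (gaussianPDFReal μ v) (-((x - μ) / v) * gaussianPDFReal μ v x) x := by
  have hexponent : HasDerivAt (fun x : ℝ => -(x - μ) ^ 2 / (2 * v)) (-((x - μ) / v)) x := by
    refine ((((hasDerivAt_id' x).sub_const μ).fun_pow 2).fun_neg.div_const _).congr_deriv ?_
    have : (v : ℝ) ≠ 0 := by exact_mod_cast hv
    push_cast
    field_simp
  refine (hexponent.exp.const_mul (√(2 * π * v))⁻¹).congr_deriv ?_
  rw [gaussianPDFReal]
  ring

lemma continuous_gaussianPDFReal (v : ℝ≥0) : Continuous (gaussianPDFReal μ v) := by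
  unfold gaussianPDFReal
  fun_prop

lemma log_gaussianPDFReal (hv : v ≠ 0) (x : ℝ) :
    Real.log (gaussianPDFReal μ v x) =
      -(Real.log (2 * π * v) / 2) - (x - μ) ^ 2 / (2 * v) := by
  have : (0 : ℝ) < v := by exact_mod_cast pos_of_ne_zero hv
  rw [gaussianPDFReal, Real.log_mul (by positivity) (by positivity), Real.log_inv, Real.log_exp,
    Real.log_sqrt (by positivity)]
  ring

lemma integrable_gaussianPDFReal_mul (hv : v ≠ 0) {φ : ℝ → ℝ}
    (hφ : Integrable φ (gaussianReal μ v)) : Integrable fun x => gaussianPDFReal μ v x * φ x := by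
  rw [gaussianReal_of_var_ne_zero μ hv, integrable_withDensity_iff_integrable_smul'
    (measurable_gaussianPDF μ v) (ae_of_all _ fun _ => gaussianPDF_lt_top)] at hφ
  simpa only [toReal_gaussianPDF, smul_eq_mul] using hφ

lemma integrable_gaussianPDFReal_mul_id (hv : v ≠ 0) :
    Integrable fun x => gaussianPDFReal μ v x * x :=
  integrable_gaussianPDFReal_mul μ hv ((memLp_id_gaussianReal 1).integrable le_rfl)

lemma integrable_gaussianPDFReal_mul_sub_sq (hv : v ≠ 0) :
    Integrable fun x => gaussianPDFReal μ v x * (x - μ) ^ 2 :=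
  integrable_gaussianPDFReal_mul μ hv
    ((memLp_id_gaussianReal 2).sub (memLp_const μ)).integrable_sq

lemma integral_gaussianPDFReal_mul_sub_sq (hv : v ≠ 0) :
    ∫ x, gaussianPDFReal μ v x * (x - μ) ^ 2 = v := by
  have hvar := variance_fun_id_gaussianReal (μ := μ) (v := v)
  rwa [variance_eq_integral aemeasurable_id', integral_id_gaussianReal,
    integral_gaussianReal_eq_integral_smul hv] at hvar

lemma gaussianPDFReal_mul_log (hv : v ≠ 0) (x : ℝ) :
    gaussianPDFReal μ v x * Real.log (gaussianPDFReal μ v x) =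
      -(Real.log (2 * π * v) / 2) * gaussianPDFReal μ v x -
        1 / (2 * v) * (gaussianPDFReal μ v x * (x - μ) ^ 2) := by
  rw [log_gaussianPDFReal μ hv]
  ring

lemma deriv_gaussianPDFReal_sq_div (hv : v ≠ 0) (x : ℝ) :
    deriv (gaussianPDFReal μ v) x ^ 2 / gaussianPDFReal μ v x =
      1 / (v : ℝ) ^ 2 * (gaussianPDFReal μ v x * (x - μ) ^ 2) := by
  have := (gaussianPDFReal_pos μ v x hv).ne'
  rw [(hasDerivAt_gaussianPDFReal μ hv x).deriv]
  field_simp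

lemma isRegularDensity_gaussianPDFReal (hv : v ≠ 0) :
    IsRegularDensity (gaussianPDFReal μ v) where
  pos x := gaussianPDFReal_pos μ v x hv
  differentiable x := (hasDerivAt_gaussianPDFReal μ hv x).differentiableAt
  integrable := integrable_gaussianPDFReal μ v
  integrable_mul_log := by
    simp only [gaussianPDFReal_mul_log μ hv]
    exact ((integrable_gaussianPDFReal μ v).const_mul _).sub
      ((integrable_gaussianPDFReal_mul_sub_sq μ hv).const_mul _)
  integrable_fisher := by
    simp only [deriv_gaussianPDFReal_sq_div μ hv]
    exact (integrable_gaussianPDFReal_mul_sub_sq μ hv).const_mul _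

lemma fisherInformation_gaussianPDFReal (hv : v ≠ 0) :
    fisherInformation (gaussianPDFReal μ v) = 1 / v := by
  have : (v : ℝ) ≠ 0 := by exact_mod_cast hv
  simp only [fisherInformation, deriv_gaussianPDFReal_sq_div μ hv]
  rw [integral_const_mul, integral_gaussianPDFReal_mul_sub_sq μ hv]
  field_simp

lemma differentialEntropy_gaussianPDFReal (hv : v ≠ 0) :
    differentialEntropy (gaussianPDFReal μ v) = Real.log (2 * π * Real.exp 1 * v) / 2 := by
  have hv' : (v : ℝ) ≠ 0 := by exact_mod_cast hv
  have hlog : Real.log (2 * π * Real.exp 1 * v) = Real.log (2 * π * v) + 1 := by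
    rw [mul_right_comm, Real.log_mul (by positivity) (Real.exp_ne_zero 1), Real.log_exp]
  simp only [differentialEntropy, gaussianPDFReal_mul_log μ hv]
  rw [integral_sub ((integrable_gaussianPDFReal μ v).const_mul _)
      ((integrable_gaussianPDFReal_mul_sub_sq μ hv).const_mul _), integral_const_mul,
    integral_const_mul, integral_gaussianPDFReal_eq_one μ hv,
    integral_gaussianPDFReal_mul_sub_sq μ hv, hlog]
  field_simp
  ring

lemma entropyPower_gaussianPDFReal (hv : v ≠ 0) : entropyPower (gaussianPDFReal μ v) = v := by
  have : (0 : ℝ) < v := by exact_mod_cast pos_of_ne_zero hv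
  rw [entropyPower, differentialEntropy_gaussianPDFReal μ hv, mul_div_cancel₀ _ two_ne_zero,
    Real.exp_log (by positivity), inv_mul_cancel_left₀ (by positivity)]

lemma gaussianPDFReal_mul_gaussianPDFReal (μ' : ℝ) {v' : ℝ≥0} (hv : v ≠ 0) (hv' : v' ≠ 0)
    (x y : ℝ) :
    gaussianPDFReal μ v x * gaussianPDFReal μ' v' (y - x) =
      gaussianPDFReal (μ + μ') (v + v') y *
        gaussianPDFReal ((μ * v' + (y - μ') * v) / (v + v')) (v * v' / (v + v')) x := by
  have : (0 : ℝ) < v := by exact_mod_cast pos_of_ne_zero hv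
  have : (0 : ℝ) < v' := by exact_mod_cast pos_of_ne_zero hv'
  simp only [gaussianPDFReal, NNReal.coe_add, NNReal.coe_mul, NNReal.coe_div]
  rw [mul_mul_mul_comm, mul_mul_mul_comm (√(2 * π * (v + v')))⁻¹, ← Real.exp_add, ← Real.exp_add,
    ← mul_inv, ← mul_inv, ← Real.sqrt_mul (by positivity), ← Real.sqrt_mul (by positivity)]
  congr 1
  · congr 2
    field_simp
  · congr 1
    field_simp
    ring

lemma gaussianPDFReal_convolution_gaussianPDFReal (μ' : ℝ) {v' : ℝ≥0} (hv : v ≠ 0)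
    (hv' : v' ≠ 0) :
    gaussianPDFReal μ v ⋆ gaussianPDFReal μ' v' = gaussianPDFReal (μ + μ') (v + v') := by
  funext y
  simp only [convolution_def, ContinuousLinearMap.lsmul_apply, smul_eq_mul,
    gaussianPDFReal_mul_gaussianPDFReal μ μ' hv hv']
  rw [integral_const_mul, integral_gaussianPDFReal_eq_one _ (by positivity), mul_one]

end Gaussian

section LogSobolev

-- Completing the square in `d` accounts for the Fisher information, and `log s ≤ s - 1`, applied
-- to the transport derivative `s = r / gaussianPDFReal 0 v t`, for the entropy.
lemma mul_log_sub_le_deriv_mul_transport {v : ℝ≥0} (hv : v ≠ 0) {r : ℝ} (hr : 0 < r) (d t : ℝ) :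
    r * Real.log r + (Real.log (2 * π * v) / 2 + 1) * r - v / 2 * (d ^ 2 / r) ≤
      d * t + r * (r / gaussianPDFReal 0 v t) := by
  have : (0 : ℝ) < v := by exact_mod_cast pos_of_ne_zero hv
  have hg := gaussianPDFReal_pos 0 v t hv
  have hlog : Real.log r + Real.log (2 * π * v) / 2 + t ^ 2 / (2 * v) ≤
      r / gaussianPDFReal 0 v t - 1 := by
    have := Real.log_le_sub_one_of_pos (div_pos hr hg)
    rw [Real.log_div hr.ne' hg.ne', log_gaussianPDFReal 0 hv, sub_zero] at this
    linarith
  have hsq : v / 2 * (d ^ 2 / r) + d * t + r * (t ^ 2 / (2 * v)) =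
      (v * d + r * t) ^ 2 / (2 * v * r) := by
    field_simp
    ring
  have hsq_nonneg : 0 ≤ (v * d + r * t) ^ 2 / (2 * v * r) := by positivity
  linarith [mul_le_mul_of_nonneg_left hlog hr.le]

namespace IsRegularDensity

variable {u : ℝ → ℝ}

-- Transport `u` to the Gaussian of variance `v` by `T`; then `(u T)'` has integral zero.
lemma log_le_differentialEntropy_add_of_integral_eq_one (hu : IsRegularDensity u)
    (h1 : ∫ x, u x = 1) {v : ℝ} (hv : 0 < v) :
    Real.log (2 * π * Real.exp 1 * v) / 2 ≤
      differentialEntropy u + (v * fisherInformation u - 1) / 2 := by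
  lift v to ℝ≥0 using hv.le
  have hv0 : v ≠ 0 := by exact_mod_cast hv.ne'
  have hg_pos (x : ℝ) : 0 < gaussianPDFReal 0 v x := gaussianPDFReal_pos 0 v x hv0
  obtain ⟨T, hT⟩ := exists_transport hu.pos hu.differentiable.continuous hu.integrable hg_pos
    (continuous_gaussianPDFReal 0 v) (integrable_gaussianPDFReal 0 v)
    (h1.trans (integral_gaussianPDFReal_eq_one 0 hv0).symm)
  have huT : Integrable fun x => u x * T x :=
    integrable_mul_comp_transport (φ := id) hu.pos hg_pos hT
      (integrable_gaussianPDFReal_mul_id 0 hv0)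
  have hlower := integral_nonpos_of_le_hasDerivAt (fun x => (hu.hasDerivAt x).mul (hT x)) huT
    ((hu.integrable_mul_log.add (hu.integrable.const_mul _)).sub
      (hu.integrable_fisher.const_mul _))
    fun x => mul_log_sub_le_deriv_mul_transport hv0 (hu.pos x) (deriv u x) (T x)
  rw [integral_sub' (hu.integrable_mul_log.add (hu.integrable.const_mul _))
      (hu.integrable_fisher.const_mul _),
    integral_add' hu.integrable_mul_log (hu.integrable.const_mul _), integral_const_mul,
    integral_const_mul, h1] at hlower
  rw [mul_right_comm, Real.log_mul (by positivity) (Real.exp_ne_zero 1), Real.log_exp,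
    differentialEntropy, fisherInformation]
  linarith

lemma integral_mul_log_sub_le_differentialEntropy_add (hu : IsRegularDensity u) {v : ℝ}
    (hv : 0 < v) :
    (∫ x, u x) * (Real.log (2 * π * Real.exp 1 * v) / 2) - (∫ x, u x) * Real.log (∫ x, u x) ≤
      differentialEntropy u + (v * fisherInformation u - ∫ x, u x) / 2 := by
  have hm : 0 < ∫ x, u x := integral_pos_of_pos hu.pos hu.integrable
  have hnormalized :=
    (hu.const_mul (inv_pos.2 hm)).log_le_differentialEntropy_add_of_integral_eq_one
      (by rw [integral_const_mul, inv_mul_cancel₀ hm.ne']) hv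
  rw [hu.differentialEntropy_const_mul (inv_pos.2 hm), fisherInformation_const_mul,
    Real.log_inv] at hnormalized
  have := mul_le_mul_of_nonneg_left hnormalized hm.le
  field_simp at this
  linarith

lemma one_le_entropyPower_mul_fisherInformation (hu : IsRegularDensity u) (h1 : ∫ x, u x = 1) :
    1 ≤ entropyPower u * fisherInformation u := by
  have := hu.log_le_differentialEntropy_add_of_integral_eq_one h1 (entropyPower_pos u)
  rw [log_two_pi_exp_one_mul_entropyPower] at this
  linarith

lemma fisherInformation_pos (hu : IsRegularDensity u) (h1 : ∫ x, u x = 1) :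
    0 < fisherInformation u :=
  pos_of_mul_pos_right (one_pos.trans_le (hu.one_le_entropyPower_mul_fisherInformation h1))
    (entropyPower_pos u).le

end IsRegularDensity

end LogSobolev

section AdditiveNoise

variable {f g : ℝ → ℝ}

lemma integrable_convolution_real (hf : Integrable f) (hg : Integrable g) :
    Integrable (f ⋆ g) :=
  hf.integrable_convolution (ContinuousLinearMap.lsmul ℝ ℝ) hg

lemma integral_convolution_real (hf : Integrable f) (hg : Integrable g) :
    ∫ y, (f ⋆ g) y = (∫ x, f x) * ∫ x, g x :=
  integral_convolution (ContinuousLinearMap.lsmul ℝ ℝ) hf hg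

lemma convolution_nonneg (hf : ∀ x, 0 ≤ f x) (hg : ∀ x, 0 ≤ g x) (y : ℝ) :
    0 ≤ (f ⋆ g) y :=
  integral_nonneg fun x => mul_nonneg (hf x) (hg (y - x))

lemma convolution_le_integral_mul {C : ℝ} (hf : ∀ x, 0 ≤ f x) (hfi : Integrable f)
    (hg : ∀ x, 0 ≤ g x) (hgC : ∀ x, g x ≤ C) (y : ℝ) : (f ⋆ g) y ≤ (∫ x, f x) * C := by
  rw [← integral_mul_const]
  exact integral_mono_of_nonneg (ae_of_all _ fun x => mul_nonneg (hf x) (hg (y - x)))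
    (hfi.mul_const C) (ae_of_all _ fun x => mul_le_mul_of_nonneg_left (hgC (y - x)) (hf x))

/-- The unnormalized posterior `x ↦ f x * g (y - x)` of `X` given `X + Z = y`, for independent `X`
and `Z` of densities `f` and `g`; its mass is the density `(f ⋆ g) y` of `X + Z`. -/
def posteriorWeight (f g : ℝ → ℝ) (y : ℝ) : ℝ → ℝ := fun x => f x * g (y - x)

lemma integral_posteriorWeight (f g : ℝ → ℝ) (y : ℝ) :
    ∫ x, posteriorWeight f g y x = (f ⋆ g) y := rfl

lemma ae_integrable_posteriorWeight (hf : Integrable f) (hg : Integrable g) :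
    ∀ᵐ y, Integrable (posteriorWeight f g y) :=
  hf.ae_convolution_exists (ContinuousLinearMap.lsmul ℝ ℝ) hg

lemma posteriorWeight_mul_log (hf : ∀ x, 0 < f x) (hg : ∀ x, 0 < g x) (y : ℝ) :
    (fun x => posteriorWeight f g y x * Real.log (posteriorWeight f g y x)) =
      posteriorWeight (fun x => f x * Real.log (f x)) g y +
        posteriorWeight f (fun x => g x * Real.log (g x)) y := by
  funext x
  simp only [posteriorWeight, Pi.add_apply]
  rw [Real.log_mul (hf x).ne' (hg _).ne']
  ring

lemma hasDerivAt_posteriorWeight (hf : Differentiable ℝ f) (hg : Differentiable ℝ g) (y x : ℝ) :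
    HasDerivAt (posteriorWeight f g y) (deriv f x * g (y - x) - f x * deriv g (y - x)) x := by
  have hreflect : HasDerivAt (fun x => g (y - x)) (-deriv g (y - x)) x :=
    (hg (y - x)).hasDerivAt.comp_const_sub y x
  exact ((hf x).hasDerivAt.mul hreflect).congr_deriv (by ring)

lemma deriv_posteriorWeight_sq_div (hf : IsRegularDensity f) (hg : IsRegularDensity g) (y : ℝ) :
    (fun x => deriv (posteriorWeight f g y) x ^ 2 / posteriorWeight f g y x) =
      posteriorWeight (fun x => deriv f x ^ 2 / f x) g y +
        posteriorWeight f (fun x => deriv g x ^ 2 / g x) y -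
          (2 : ℝ) • posteriorWeight (deriv f) (deriv g) y := by
  funext x
  have := (hf.pos x).ne'
  have := (hg.pos (y - x)).ne'
  rw [(hasDerivAt_posteriorWeight hf.differentiable hg.differentiable y x).deriv]
  simp only [posteriorWeight, Pi.add_apply, Pi.sub_apply, Pi.smul_apply, smul_eq_mul]
  field_simp
  ring

lemma ae_isRegularDensity_posteriorWeight (hf : IsRegularDensity f) (hg : IsRegularDensity g) :
    ∀ᵐ y, IsRegularDensity (posteriorWeight f g y) := by
  filter_upwards [ae_integrable_posteriorWeight hf.integrable hg.integrable,
    ae_integrable_posteriorWeight hf.integrable_mul_log hg.integrable,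
    ae_integrable_posteriorWeight hf.integrable hg.integrable_mul_log,
    ae_integrable_posteriorWeight hf.integrable_fisher hg.integrable,
    ae_integrable_posteriorWeight hf.integrable hg.integrable_fisher,
    ae_integrable_posteriorWeight hf.integrable_deriv hg.integrable_deriv]
    with y hfg hlf hlg hJf hJg hcross
  exact
    { pos x := mul_pos (hf.pos x) (hg.pos (y - x))
      differentiable x :=
        (hasDerivAt_posteriorWeight hf.differentiable hg.differentiable y x).differentiableAt
      integrable := hfg
      integrable_mul_log := by
        rw [posteriorWeight_mul_log hf.pos hg.pos]
        exact hlf.add hlg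
      integrable_fisher := by
        rw [deriv_posteriorWeight_sq_div hf hg]
        exact (hJf.add hJg).sub (hcross.smul 2) }

lemma differentialEntropy_posteriorWeight_ae_eq (hf : IsRegularDensity f)
    (hg : IsRegularDensity g) :
    (fun y => differentialEntropy (posteriorWeight f g y)) =ᵐ[volume]
      -((fun x => f x * Real.log (f x)) ⋆ g + f ⋆ fun x => g x * Real.log (g x)) := by
  filter_upwards [ae_integrable_posteriorWeight hf.integrable_mul_log hg.integrable,
    ae_integrable_posteriorWeight hf.integrable hg.integrable_mul_log] with y hlf hlg
  rw [differentialEntropy, posteriorWeight_mul_log hf.pos hg.pos, integral_add' hlf hlg]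
  rfl

lemma fisherInformation_posteriorWeight_ae_eq (hf : IsRegularDensity f)
    (hg : IsRegularDensity g) :
    (fun y => fisherInformation (posteriorWeight f g y)) =ᵐ[volume]
      (fun x => deriv f x ^ 2 / f x) ⋆ g + f ⋆ (fun x => deriv g x ^ 2 / g x) -
        (2 : ℝ) • (deriv f ⋆ deriv g) := by
  filter_upwards [ae_integrable_posteriorWeight hf.integrable_fisher hg.integrable,
    ae_integrable_posteriorWeight hf.integrable hg.integrable_fisher,
    ae_integrable_posteriorWeight hf.integrable_deriv hg.integrable_deriv] with y hJf hJg hcross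
  rw [fisherInformation, deriv_posteriorWeight_sq_div hf hg,
    integral_sub' (hJf.add hJg) (hcross.smul 2), integral_add' hJf hJg]
  simp only [Pi.smul_apply, integral_smul]
  rfl

lemma integrable_differentialEntropy_posteriorWeight (hf : IsRegularDensity f)
    (hg : IsRegularDensity g) :
    Integrable fun y => differentialEntropy (posteriorWeight f g y) :=
  ((integrable_convolution_real hf.integrable_mul_log hg.integrable).add
    (integrable_convolution_real hf.integrable hg.integrable_mul_log)).neg.congr
    (differentialEntropy_posteriorWeight_ae_eq hf hg).symm

lemma integral_differentialEntropy_posteriorWeight (hf : IsRegularDensity f)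
    (hg : IsRegularDensity g) :
    ∫ y, differentialEntropy (posteriorWeight f g y) =
      differentialEntropy f * (∫ x, g x) + (∫ x, f x) * differentialEntropy g := by
  rw [integral_congr_ae (differentialEntropy_posteriorWeight_ae_eq hf hg), integral_neg',
    integral_add' (integrable_convolution_real hf.integrable_mul_log hg.integrable)
      (integrable_convolution_real hf.integrable hg.integrable_mul_log),
    integral_convolution_real hf.integrable_mul_log hg.integrable,
    integral_convolution_real hf.integrable hg.integrable_mul_log]
  unfold differentialEntropy
  ring

lemma integrable_fisherInformation_posteriorWeight (hf : IsRegularDensity f)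
    (hg : IsRegularDensity g) :
    Integrable fun y => fisherInformation (posteriorWeight f g y) :=
  (((integrable_convolution_real hf.integrable_fisher hg.integrable).add
    (integrable_convolution_real hf.integrable hg.integrable_fisher)).sub
    ((integrable_convolution_real hf.integrable_deriv hg.integrable_deriv).smul (2 : ℝ))).congr
    (fisherInformation_posteriorWeight_ae_eq hf hg).symm

lemma integral_fisherInformation_posteriorWeight (hf : IsRegularDensity f)
    (hg : IsRegularDensity g) :
    ∫ y, fisherInformation (posteriorWeight f g y) =
      fisherInformation f * (∫ x, g x) + (∫ x, f x) * fisherInformation g := by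
  have hJf := integrable_convolution_real hf.integrable_fisher hg.integrable
  have hJg := integrable_convolution_real hf.integrable hg.integrable_fisher
  have hcross := integrable_convolution_real hf.integrable_deriv hg.integrable_deriv
  have hcross_zero : ∫ y, (deriv f ⋆ deriv g) y = 0 := by
    rw [integral_convolution_real hf.integrable_deriv hg.integrable_deriv, hf.integral_deriv,
      zero_mul]
  rw [integral_congr_ae (fisherInformation_posteriorWeight_ae_eq hf hg),
    integral_sub' (hJf.add hJg) (hcross.smul 2), integral_add' hJf hJg,
    integral_convolution_real hf.integrable_fisher hg.integrable,
    integral_convolution_real hf.integrable hg.integrable_fisher]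
  simp only [Pi.smul_apply, integral_smul, hcross_zero, smul_zero, sub_zero]
  rfl

lemma integrable_mul_log_of_le {α : Type*} [MeasurableSpace α] {μ : Measure α} {m L : α → ℝ}
    {C : ℝ} (hm : Integrable m μ) (hL : Integrable L μ) (hm0 : ∀ y, 0 ≤ m y) (hmC : ∀ y, m y ≤ C)
    (hLm : ∀ᵐ y ∂μ, L y ≤ m y * Real.log (m y)) :
    Integrable (fun y => m y * Real.log (m y)) μ := by
  refine integrable_of_le_of_le (Real.continuous_mul_log.comp_aestronglyMeasurable hm.1) hLm
    (ae_of_all _ fun y => ?_) hL (hm.mul_const (Real.log C))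
  rcases (hm0 y).eq_or_lt with hy | hy
  · simp [← hy]
  · exact mul_le_mul_of_nonneg_left (Real.log_le_log hy (hmC y)) hy.le

lemma log_add_differentialEntropy_convolution_le (hf : IsRegularDensity f) (hf1 : ∫ x, f x = 1)
    (hg : IsRegularDensity g) (hg1 : ∫ x, g x = 1) {v : ℝ} (hv : 0 < v) :
    Real.log (2 * π * Real.exp 1 * v) / 2 + differentialEntropy (f ⋆ g) ≤
      differentialEntropy f + differentialEntropy g +
        (v * (fisherInformation f + fisherInformation g) - 1) / 2 := by
  set c := (Real.log (2 * π * Real.exp 1 * v) + 1) / 2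
  set L : ℝ → ℝ := (fun y => c * (f ⋆ g) y) -
    (fun y => differentialEntropy (posteriorWeight f g y)) -
      fun y => v / 2 * fisherInformation (posteriorWeight f g y)
  have hm : Integrable (f ⋆ g) := integrable_convolution_real hf.integrable hg.integrable
  have hh := integrable_differentialEntropy_posteriorWeight hf hg
  have hJ := integrable_fisherInformation_posteriorWeight hf hg
  have hL : Integrable L := ((hm.const_mul c).sub hh).sub (hJ.const_mul (v / 2))
  have hL_le : ∀ᵐ y, L y ≤ (f ⋆ g) y * Real.log ((f ⋆ g) y) := by
    filter_upwards [ae_isRegularDensity_posteriorWeight hf hg] with y hy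
    have := hy.integral_mul_log_sub_le_differentialEntropy_add hv
    rw [integral_posteriorWeight] at this
    simp only [L, c, Pi.sub_apply]
    linarith
  have hmlog : Integrable fun y => (f ⋆ g) y * Real.log ((f ⋆ g) y) := by
    obtain ⟨C, hC⟩ := hg.exists_le
    exact integrable_mul_log_of_le hm hL
      (convolution_nonneg (fun x => (hf.pos x).le) fun x => (hg.pos x).le)
      (convolution_le_integral_mul (fun x => (hf.pos x).le) hf.integrable
        (fun x => (hg.pos x).le) hC) hL_le
  have hintegral := integral_mono_ae hL hmlog hL_le
  rw [integral_sub' ((hm.const_mul c).sub hh) (hJ.const_mul _), integral_sub' (hm.const_mul c) hh,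
    integral_const_mul, integral_const_mul, integral_convolution_real hf.integrable hg.integrable,
    integral_differentialEntropy_posteriorWeight hf hg,
    integral_fisherInformation_posteriorWeight hf hg, hf1, hg1] at hintegral
  rw [differentialEntropy.eq_def (f ⋆ g)]
  simp only [c] at hintegral
  linarith

lemma one_div_fisherInformation_add_le_entropyPower_mul_div (hf : IsRegularDensity f)
    (hf1 : ∫ x, f x = 1) (hg : IsRegularDensity g) (hg1 : ∫ x, g x = 1) :
    1 / (fisherInformation f + fisherInformation g) ≤
      entropyPower f * entropyPower g / entropyPower (f ⋆ g) := by
  have hJ : 0 < fisherInformation f + fisherInformation g :=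
    add_pos (hf.fisherInformation_pos hf1) (hg.fisherInformation_pos hg1)
  have h := log_add_differentialEntropy_convolution_le hf hf1 hg hg1 (one_div_pos.2 hJ)
  rw [one_div_mul_cancel hJ.ne'] at h
  have hK : 0 < 2 * π * Real.exp 1 := by positivity
  rw [entropyPower_mul_div, inv_mul_eq_div, le_div_iff₀' hK,
    ← Real.log_le_iff_le_exp (by positivity)]
  linarith

end AdditiveNoise

section GaussianChannel

variable {f : ℝ → ℝ}

lemma eq_gaussianPDFReal {μ σ : ℝ} (hf : ∀ x, f x = (√(2 * π * σ ^ 2))⁻¹ *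
    Real.exp (-(x - μ) ^ 2 / (2 * σ ^ 2))) : f = gaussianPDFReal μ (σ ^ 2).toNNReal := by
  funext x
  rw [hf, gaussianPDFReal, Real.coe_toNNReal _ (sq_nonneg σ)]

lemma eq_convolution_gaussianPDFReal {fY : ℝ → ℝ} {a : ℝ} (ha : 0 ≤ a)
    (hfY : ∀ y, fY y = ∫ x, f x * ((√(2 * π * a))⁻¹ * Real.exp (-(y - x) ^ 2 / (2 * a)))) :
    fY = f ⋆ gaussianPDFReal 0 a.toNNReal := by
  funext y
  simp only [hfY, convolution_def, ContinuousLinearMap.lsmul_apply, smul_eq_mul, gaussianPDFReal,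
    Real.coe_toNNReal a ha, sub_zero]

lemma one_div_add_fisherInformation_le_mul_entropyPower_div
    (hf : IsRegularDensity f) (hf1 : ∫ x, f x = 1) {v : ℝ≥0} (hv : v ≠ 0) :
    1 / (1 / v + fisherInformation f) ≤
      v * entropyPower f / entropyPower (f ⋆ gaussianPDFReal 0 v) := by
  have := one_div_fisherInformation_add_le_entropyPower_mul_div hf hf1
    (isRegularDensity_gaussianPDFReal 0 hv) (integral_gaussianPDFReal_eq_one 0 hv)
  rwa [fisherInformation_gaussianPDFReal 0 hv, entropyPower_gaussianPDFReal 0 hv, add_comm,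
    mul_comm] at this

lemma mul_entropyPower_div_entropyPower_gaussianPDFReal_convolution (μ : ℝ) {v w : ℝ≥0}
    (hv : v ≠ 0) (hw : w ≠ 0) :
    v * entropyPower (gaussianPDFReal μ w) /
        entropyPower (gaussianPDFReal μ w ⋆ gaussianPDFReal 0 v) =
      1 / (1 / v + fisherInformation (gaussianPDFReal μ w)) := by
  rw [gaussianPDFReal_convolution_gaussianPDFReal μ 0 hw hv, fisherInformation_gaussianPDFReal μ hw,
    entropyPower_gaussianPDFReal μ hw, entropyPower_gaussianPDFReal _ (by positivity)]
  have : (v : ℝ) ≠ 0 := by exact_mod_cast hv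
  have : (w : ℝ) ≠ 0 := by exact_mod_cast hw
  push_cast
  field_simp

end GaussianChannel

theorem entropy_power_bound_tighter_than_bcrlb_general {f fY : ℝ → ℝ} {a : ℝ}
    (hf : IsRegularDensity f) (hf1 : ∫ x, f x = 1) (ha : 0 < a)
    (hfY : ∀ y, fY y = ∫ x, f x * ((√(2 * π * a))⁻¹ * Real.exp (-(y - x) ^ 2 / (2 * a)))) :
    1 / (1 / a + fisherInformation f) ≤ a * entropyPower f / entropyPower fY ∧
      ∀ μ σ : ℝ, 0 < σ →
        (∀ x, f x = (√(2 * π * σ ^ 2))⁻¹ * Real.exp (-(x - μ) ^ 2 / (2 * σ ^ 2))) →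
        a * entropyPower f / entropyPower fY = 1 / (1 / a + fisherInformation f) := by
  obtain rfl := eq_convolution_gaussianPDFReal ha.le hfY
  lift a to ℝ≥0 using ha.le
  rw [Real.toNNReal_coe]
  have ha0 : a ≠ 0 := by exact_mod_cast ha.ne'
  refine ⟨one_div_add_fisherInformation_le_mul_entropyPower_div hf hf1 ha0,
    fun μ σ hσ hfσ => ?_⟩
  have hσ0 : (σ ^ 2).toNNReal ≠ 0 := (Real.toNNReal_pos.2 (by positivity)).ne'
  rw [eq_gaussianPDFReal hfσ]
  exact mul_entropyPower_div_entropyPower_gaussianPDFReal_convolution μ ha0 hσ0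

/-- **The conditional entropy power bound is tighter than the Bayesian
Cramér–Rao bound.** For the additive Gaussian noise channel `Y = X + √a·W`,
`N(X|Y) = a·N(X)/N(Y) ≥ 1/(1/a + J(X))`, with equality when `X` is
Gaussian. -/
theorem entropy_power_bound_tighter_than_bcrlb
    (fX : ℝ → ℝ)
    (hfX_pos : ∀ x, 0 < fX x)
    (hfX_diff : Differentiable ℝ fX)
    (hfX_prob : (∫ x, fX x) = 1)
    (hfX_mom : Integrable (fun x => x ^ 2 * fX x))
    (hfX_ent : Integrable (fun x => fX x * Real.log (fX x)))
    (hfX_fisher_int : Integrable (fun x => (deriv fX x) ^ 2 / fX x))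
    (hfX_fisher_pos : 0 < ∫ x, (deriv fX x) ^ 2 / fX x)
    (a : ℝ) (ha : 0 < a)
    (fY : ℝ → ℝ)
    (hfY : ∀ y, fY y =
      ∫ x, fX x * ((Real.sqrt (2 * Real.pi * a))⁻¹ *
        Real.exp (-(y - x) ^ 2 / (2 * a))))
    (entX entY : ℝ)
    (hentX : entX = -∫ x, fX x * Real.log (fX x))
    (hentY : entY = -∫ y, fY y * Real.log (fY y)) :
    a * ((2 * Real.pi * Real.exp 1)⁻¹ * Real.exp (2 * entX)) /
        ((2 * Real.pi * Real.exp 1)⁻¹ * Real.exp (2 * entY))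
      ≥ 1 / (1 / a + ∫ x, (deriv fX x) ^ 2 / fX x) ∧
    (∀ μ σ : ℝ, 0 < σ →
      (∀ x, fX x = (Real.sqrt (2 * Real.pi * σ ^ 2))⁻¹ *
        Real.exp (-(x - μ) ^ 2 / (2 * σ ^ 2))) →
      a * ((2 * Real.pi * Real.exp 1)⁻¹ * Real.exp (2 * entX)) /
          ((2 * Real.pi * Real.exp 1)⁻¹ * Real.exp (2 * entY))
        = 1 / (1 / a + ∫ x, (deriv fX x) ^ 2 / fX x)) := by
  subst hentX hentY
  exact entropy_power_bound_tighter_than_bcrlb_general ⟨hfX_pos, hfX_diff,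
    .of_integral_ne_zero (by simp [hfX_prob]), hfX_ent, hfX_fisher_int⟩ hfX_prob ha hfY
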